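/- Let h = (I, E) be a hypergraph with |I| = d and let χ_d(h) be the polynomial that for positive integers m counts the proper colorings of h with m colors. Then for every positive integer m, (-1)^d χ_d(h)(-m) equals the number of compatible pairs (σ, c) of an acyclic heading σ of h and a (not necessarily proper) coloring c of h with m colors. In particular, the number of acyclic headings of h equals (-1)^d χ_d(h)(-1). -/

import Mathlib

open Set Pointwise
open scoped Classical

noncomputable section

/-- The pairing of a direction `y` with a point `x`: `y(x) = ∑ i, y i * x i`. -/
def evalDir {I : Type*} [Fintype I] (y x : I → ℝ) : ℝ := ∑ i, y i * x i

/-- A polytope is the convex hull of a nonempty finite set of points. -/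
def IsPolytope {I : Type*} [Fintype I] (P : Set (I → ℝ)) : Prop :=
  ∃ V : Finset (I → ℝ), V.Nonempty ∧ P = convexHull ℝ (V : Set (I → ℝ))

/-- The `y`-maximal face of `P`. -/
def maxFace {I : Type*} [Fintype I] (P : Set (I → ℝ)) (y : I → ℝ) : Set (I → ℝ) :=
  {x ∈ P | ∀ x' ∈ P, evalDir y x' ≤ evalDir y x}

/-- The simplex `Δ_e = conv{ b_i : i ∈ e }` of a hyperedge `e`. -/
def hgSimplex {I : Type*} [Fintype I] [DecidableEq I] (e : Finset I) : Set (I → ℝ) :=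
  convexHull ℝ ((fun i => Pi.single i (1 : ℝ)) '' (e : Set I))

/-- The hypergraphic polytope of the hypergraph with hyperedges `edges a`, `a : ι`:
the Minkowski sum `Σ_a Δ_{edges a}`. -/
def hgPolytope {I : Type*} [Fintype I] [DecidableEq I] {ι : Type*} [Fintype ι]
    (edges : ι → Finset I) : Set (I → ℝ) :=
  {x | ∃ f : ι → I → ℝ, (∀ a, f a ∈ hgSimplex (edges a)) ∧ x = ∑ a, f a}

/-- A heading of a hypergraph: a choice of a head `σ e ∈ e` for every hyperedge `e`. -/
def IsHeading {I : Type*} {ι : Type*} (edges : ι → Finset I) (σ : ι → I) : Prop :=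
  ∀ a, σ a ∈ edges a

/-- A heading contains an oriented cycle `e_1, …, e_ℓ` if `σ(e_j) ∈ e_{j+1} \ {σ(e_{j+1})}`
cyclically (indices mod `ℓ`). -/
def HasOrientedCycle {I : Type*} {ι : Type*} (edges : ι → Finset I) (σ : ι → I) : Prop :=
  ∃ (ℓ : ℕ) (a : ℕ → ι), 0 < ℓ ∧
    ∀ j < ℓ, σ (a j) ∈ edges (a ((j + 1) % ℓ)) ∧ σ (a j) ≠ σ (a ((j + 1) % ℓ))

/-- An acyclic heading: a heading with no oriented cycle. -/
def IsAcyclicHeading {I : Type*} {ι : Type*} (edges : ι → Finset I) (σ : ι → I) : Prop :=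
  IsHeading edges σ ∧ ¬ HasOrientedCycle edges σ

/-- The in-degree vector `δ(σ)` of a heading: `δ(σ)_i` is the number of hyperedges with
head `i`. -/
def inDegVec {I : Type*} [DecidableEq I] {ι : Type*} [Fintype ι] (σ : ι → I) : I → ℝ :=
  fun i => ((Finset.univ.filter fun a => σ a = i).card : ℝ)

/-- A coloring `c` of a hypergraph is proper if every hyperedge has a unique maximal node. -/
def IsProperColoring {I : Type*} {ι : Type*} (edges : ι → Finset I) (c : I → ℕ) : Prop :=
  ∀ a, ∃! i, i ∈ edges a ∧ ∀ j ∈ edges a, c j ≤ c i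

/-- A heading `σ` and a coloring `c` are compatible if, for every hyperedge, the head
carries the maximal color of the hyperedge. -/
def Compatible {I : Type*} {ι : Type*} (edges : ι → Finset I) (σ : ι → I) (c : I → ℕ) :
    Prop :=
  ∀ a, ∀ j ∈ edges a, c j ≤ c (σ a)

open Polynomial in
lemma exists_poly_pow {A : Type*} [Ring A] [Algebra ℝ A] (N : A) (D : ℕ) (hN : N ^ D = 0)
    (φ : A →ₗ[ℝ] ℝ) : ∃ p : ℝ[X], ∀ m : ℕ, p.eval (m : ℝ) = φ ((N + 1) ^ m) := by
  refine ⟨∑ k ∈ Finset.range D, Polynomial.C (φ (N ^ k) * ((k.factorial : ℝ))⁻¹) *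
    descPochhammer ℝ k, fun m => ?_⟩
  have h1 : (N + 1) ^ m = ∑ k ∈ Finset.range D, (m.choose k : ℝ) • N ^ k := by
    rw [(Commute.one_right N).add_pow]
    have e1 : ∑ k ∈ Finset.range (m + 1), N ^ k * 1 ^ (m - k) * (m.choose k : A)
        = ∑ k ∈ Finset.range (m + 1 + D), (m.choose k : ℝ) • N ^ k := by
      rw [Finset.sum_range_add _ (m + 1) D, Finset.sum_eq_zero (s := Finset.range D), add_zero]
      · refine Finset.sum_congr rfl fun k _ => ?_
        rw [one_pow, mul_one, Algebra.smul_def, map_natCast, (Nat.cast_commute _ _).eq]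
      · intro k _
        rw [Nat.choose_eq_zero_of_lt (by omega)]; simp
    rw [e1, add_comm (m + 1) D, Finset.sum_range_add _ D (m + 1), Finset.sum_eq_zero (s := Finset.range (m+1)), add_zero]
    intro k _
    rw [pow_add, hN, zero_mul, smul_zero]
  rw [h1, map_sum, Polynomial.eval_finsetSum]
  refine Finset.sum_congr rfl fun k _ => ?_
  rw [map_smul, smul_eq_mul, Polynomial.eval_mul, Polynomial.eval_C,
    descPochhammer_eval_eq_descFactorial, Nat.descFactorial_eq_factorial_mul_choose]
  have : (k.factorial : ℝ) ≠ 0 := by positivity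
  push_cast
  field_simp

lemma poly_eq_of_nat {p q : Polynomial ℝ} (n : ℕ)
    (h : ∀ m : ℕ, n ≤ m → p.eval (m : ℝ) = q.eval (m : ℝ)) : p = q := by
  refine Polynomial.eq_of_infinite_eval_eq p q ?_
  refine Set.Infinite.mono (s := (fun m : ℕ => (m : ℝ)) '' Set.Ici n) ?_ ?_
  · rintro _ ⟨m, hm, rfl⟩
    exact h m hm
  · exact (Set.Ici_infinite n).image Nat.cast_injective.injOn

open Polynomial in
lemma exists_poly_recip {A : Type*} [Ring A] [Algebra ℝ A] (a b : A) (D : ℕ)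
    (hN : (a - 1) ^ D = 0) (hba : b * a = 1)
    (φ : A →ₗ[ℝ] ℝ) : ∃ p : ℝ[X], (∀ m : ℕ, p.eval (m : ℝ) = φ (a ^ m)) ∧
      ∀ m : ℕ, p.eval (-(m : ℝ)) = φ (b ^ m) := by
  obtain ⟨p, hp⟩ := exists_poly_pow (a - 1) D hN φ
  simp only [sub_add_cancel] at hp
  refine ⟨p, hp, fun n => ?_⟩
  obtain ⟨q, hq⟩ := exists_poly_pow (a - 1) D hN (φ ∘ₗ LinearMap.mulLeft ℝ (b ^ n))
  simp only [sub_add_cancel, LinearMap.comp_apply, LinearMap.mulLeft_apply] at hq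
  have hpow : ∀ n : ℕ, b ^ n * a ^ n = 1 := by
    intro n
    induction n with
    | zero => simp
    | succ n ih => rw [pow_succ, pow_succ', mul_assoc, ← mul_assoc b, hba, one_mul, ih]
  have hqp : q = p.comp (X - C (n : ℝ)) := by
    refine poly_eq_of_nat n fun m hm => ?_
    rw [hq, eval_comp]
    obtain ⟨k, rfl⟩ := Nat.exists_eq_add_of_le hm
    rw [pow_add, ← mul_assoc, hpow, one_mul, ← hp]
    simp
  have := hq 0
  rw [hqp, eval_comp] at this
  simpa using this

section OrderPoly

variable {I : Type*} [Fintype I]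

/-- Down-closed finite sets of nodes. -/
abbrev DownSet (r : I → I → Prop) : Type _ :=
  {U : Finset I // ∀ i j, r i j → j ∈ U → i ∈ U}

/-- The zero set of a coloring. -/
def zeroSet (c : I → ℕ) : Finset I := Finset.univ.filter fun i => c i = 0

/-- Colorings with values at most `m`, zero exactly on `U`, with property `R`. -/
def goodCol (R : (I → ℕ) → Prop) (m : ℕ) (U : Finset I) : Finset (I → ℕ) :=
  (Fintype.piFinset fun _ => Finset.range (m + 1)).filter fun c => zeroSet c = U ∧ R c

lemma mem_goodCol (R : (I → ℕ) → Prop) (m : ℕ) (U : Finset I) (c : I → ℕ) :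
    c ∈ goodCol R m U ↔ (∀ i, c i ≤ m) ∧ zeroSet c = U ∧ R c := by
  simp [goodCol]

lemma mem_zeroSet (c : I → ℕ) (i : I) : i ∈ zeroSet c ↔ c i = 0 := by simp [zeroSet]

/-- The transfer matrix. -/
def transfer (r : I → I → Prop) (T : Finset I → Finset I → Prop) :
    Matrix (DownSet r) (DownSet r) ℝ :=
  fun U V => if T U.1 V.1 then 1 else 0

/-- The full down set. -/
def topDown (r : I → I → Prop) : DownSet r := ⟨Finset.univ, fun _ _ _ _ => Finset.mem_univ _⟩

/-- The empty down set. -/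
def botDown (r : I → I → Prop) : DownSet r := ⟨∅, fun _ _ _ h => by simp at h⟩

lemma transfer_pow (r : I → I → Prop) (T : Finset I → Finset I → Prop) (R : (I → ℕ) → Prop)
    (h0 : R 0) (hdown : ∀ c, R c → ∀ i j, r i j → c j = 0 → c i = 0)
    (hsub : ∀ U V, T U V → U ⊆ V)
    (hR : ∀ c, (∀ i j, r i j → c j = 0 → c i = 0) →
      (R c ↔ R (fun i => c i - 1) ∧ T (zeroSet c) (zeroSet fun i => c i - 1)))
    (m : ℕ) (U : DownSet r) :
    (transfer r T ^ m) U (topDown r) = ((goodCol R m U.1).card : ℝ) := by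
  induction m generalizing U with
  | zero =>
    rw [pow_zero, Matrix.one_apply]
    split_ifs with h
    · have : goodCol R 0 U.1 = {0} := by
        ext c
        rw [mem_goodCol, Finset.mem_singleton]
        constructor
        · rintro ⟨h, -⟩
          funext i
          simpa using h i
        · rintro rfl
          refine ⟨by simp, ?_, h0⟩
          rw [h]; ext i; simp [mem_zeroSet, topDown]
      rw [this]; simp
    · have : goodCol R 0 U.1 = ∅ := by
        ext c
        rw [mem_goodCol]
        simp only [Finset.notMem_empty, iff_false]
        rintro ⟨h1, h2, -⟩
        apply h
        apply Subtype.ext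
        rw [← h2]
        ext i
        have := h1 i
        simp only [mem_zeroSet, topDown, Finset.mem_univ, iff_true]
        omega
      rw [this]; simp
  | succ m ih =>
    rw [pow_succ', Matrix.mul_apply]
    have hmaps : ∀ c ∈ goodCol R (m+1) U.1,
        ∀ i j, r i j → j ∈ (zeroSet fun i => c i - 1) → i ∈ (zeroSet fun i => c i - 1) := by
      intro c hc i j hij hj
      rw [mem_goodCol] at hc
      have hd := hdown c hc.2.2
      have := ((hR c hd).1 hc.2.2).1
      rw [mem_zeroSet] at hj ⊢
      exact hdown _ this i j hij hj
    have key : ∀ V : DownSet r, transfer r T U V * ((goodCol R m V.1).card : ℝ) =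
        (((goodCol R (m+1) U.1).filter fun c => (zeroSet fun i => c i - 1) = V.1).card : ℝ) := by
      intro V
      unfold transfer
      split_ifs with hT
      · rw [one_mul]
        congr 1
        symm
        refine Finset.card_bij' (fun c _ => fun i => c i - 1)
          (fun c _ => fun i => if i ∈ U.1 then 0 else c i + 1) ?_ ?_ ?_ ?_
        · intro c hc
          rw [Finset.mem_filter, mem_goodCol] at hc
          obtain ⟨⟨h1, h2, h3⟩, h4⟩ := hc
          rw [mem_goodCol]
          refine ⟨fun i => ?_, h4, ((hR c (hdown c h3)).1 h3).1⟩
          have := h1 i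
          omega
        · intro c hc
          rw [mem_goodCol] at hc
          obtain ⟨h1, h2, h3⟩ := hc
          have e1 : (fun i => (if i ∈ U.1 then 0 else c i + 1) - 1) = c := by
            funext i
            split_ifs with hi
            · have := hsub _ _ hT hi
              rw [← h2, mem_zeroSet] at this
              simp [this]
            · simp
          have e2 : zeroSet (fun i => if i ∈ U.1 then 0 else c i + 1) = U.1 := by
            ext i
            rw [mem_zeroSet]
            by_cases hi : i ∈ U.1 <;> simp [hi]
          rw [Finset.mem_filter, mem_goodCol]
          refine ⟨⟨fun i => ?_, e2, ?_⟩, ?_⟩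
          · have := h1 i
            split_ifs <;> omega
          · rw [hR, e1, e2, h2]
            · exact ⟨h3, hT⟩
            · intro i j hij hj
              rw [← mem_zeroSet (fun i => if i ∈ U.1 then 0 else c i + 1), e2] at hj ⊢
              exact U.2 i j hij hj
          · rw [e1, h2]
        · intro c hc
          rw [Finset.mem_filter, mem_goodCol] at hc
          obtain ⟨⟨h1, h2, h3⟩, h4⟩ := hc
          funext i
          dsimp only
          have hi : i ∈ U.1 ↔ c i = 0 := by rw [← h2, mem_zeroSet]
          split_ifs with h
          · exact (hi.1 h).symm
          · have : c i ≠ 0 := fun h' => h (hi.2 h')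
            omega
        · intro c hc
          rw [mem_goodCol] at hc
          obtain ⟨h1, h2, h3⟩ := hc
          funext i
          dsimp only
          split_ifs with hi
          · have := hsub _ _ hT hi
            rw [← h2, mem_zeroSet] at this
            simp [this]
          · simp
      · rw [zero_mul, Finset.filter_false_of_mem]
        · simp
        · intro c hc h4
          rw [mem_goodCol] at hc
          obtain ⟨h1, h2, h3⟩ := hc
          have := ((hR c (hdown c h3)).1 h3).2
          rw [h2, h4] at this
          exact hT this
    simp only [ih, key]
    rw [← Nat.cast_sum]
    congr 1
    have hm : ∀ c ∈ goodCol R (m+1) U.1,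
        (zeroSet fun i => c i - 1) ∈ Finset.univ.image (fun V : DownSet r => V.1) := by
      intro c hc
      exact Finset.mem_image.2 ⟨⟨_, hmaps c hc⟩, Finset.mem_univ _, rfl⟩
    rw [Finset.card_eq_sum_card_fiberwise hm, Finset.sum_image]
    intro x _ y _ h
    exact Subtype.ext h

/-- Weak transfer relation. -/
def TW (U V : Finset I) : Prop := U ⊆ V

/-- Strict transfer relation. -/
def TS (r : I → I → Prop) (U V : Finset I) : Prop :=
  U ⊆ V ∧ ∀ i j, r i j → i ∈ V → i ∉ U → j ∈ V → j ∉ U → False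

lemma weak_count (r : I → I → Prop) (m : ℕ) (U : DownSet r) :
    (transfer r TW ^ m) U (topDown r) =
      ((goodCol (fun c => ∀ i j, r i j → c i ≤ c j) m U.1).card : ℝ) := by
  apply transfer_pow
  · intro i j _; simp
  · intro c hc i j hij hj
    have := hc i j hij
    omega
  · intro U V h; exact h
  · intro c hd
    constructor
    · intro h
      refine ⟨fun i j hij => ?_, fun i hi => ?_⟩
      · have := h i j hij
        dsimp only
        omega
      · rw [mem_zeroSet] at hi ⊢
        omega
    · rintro ⟨h, -⟩ i j hij
      have h1 := h i j hij
      have h2 := hd i j hij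
      dsimp only at h1
      omega

lemma strict_count (r : I → I → Prop) (m : ℕ) (U : DownSet r) :
    (transfer r (TS r) ^ m) U (topDown r) =
      ((goodCol (fun c => ∀ i j, r i j → c i < c j ∨ (c i = 0 ∧ c j = 0)) m U.1).card : ℝ) := by
  apply transfer_pow
  · intro i j _; simp
  · intro c hc i j hij hj
    have := hc i j hij
    omega
  · intro U V h; exact h.1
  · intro c hd
    constructor
    · intro h
      refine ⟨fun i j hij => ?_, fun i hi => ?_, fun i j hij => ?_⟩
      · have := h i j hij
        dsimp only
        omega
      · rw [mem_zeroSet] at hi ⊢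
        omega
      · have := h i j hij
        simp only [mem_zeroSet]
        intro _ _ _ _
        omega
    · rintro ⟨h, -, h3⟩ i j hij
      have h1 := h i j hij
      have h2 := hd i j hij
      have h3 := h3 i j hij
      simp only [mem_zeroSet] at h3
      dsimp only at h1
      by_contra hcon
      exact h3 (by omega) (by omega) (by omega) (by omega)

lemma transfer_nilp (r : I → I → Prop) (k : ℕ) (U V : DownSet r)
    (h : ((transfer r TW - 1) ^ k) U V ≠ 0) : U.1.card + k ≤ V.1.card := by
  induction k generalizing V with
  | zero =>
    rw [pow_zero, Matrix.one_apply] at h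
    have : U = V := by by_contra hh; simp [hh] at h
    rw [this]; simp
  | succ k ih =>
    rw [pow_succ, Matrix.mul_apply] at h
    obtain ⟨W, -, hW⟩ := Finset.exists_ne_zero_of_sum_ne_zero h
    have h1 := ih W (left_ne_zero_of_mul hW)
    have h2 := right_ne_zero_of_mul hW
    have h3 : W.1 ⊂ V.1 := by
      rw [Matrix.sub_apply, Matrix.one_apply] at h2
      unfold transfer TW at h2
      by_cases e : W = V
      · subst e; simp at h2
      · by_cases e2 : W.1 ⊆ V.1
        · exact Finset.ssubset_iff_subset_ne.2 ⟨e2, fun h => e (Subtype.ext h)⟩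
        · simp [e, e2] at h2
    have := Finset.card_lt_card h3
    omega

/-- The signed strict transfer matrix. -/
def signed (r : I → I → Prop) : Matrix (DownSet r) (DownSet r) ℝ :=
  fun U V => (-1) ^ (U.1.card + V.1.card) * transfer r (TS r) U V

lemma signed_pow (r : I → I → Prop) (m : ℕ) (U V : DownSet r) :
    (signed r ^ m) U V = (-1) ^ (U.1.card + V.1.card) * (transfer r (TS r) ^ m) U V := by
  induction m generalizing V with
  | zero =>
    rw [pow_zero, pow_zero, Matrix.one_apply]
    split_ifs with h
    · rw [h, ← two_mul, pow_mul]; simp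
    · simp
  | succ m ih =>
    rw [pow_succ, pow_succ, Matrix.mul_apply, Matrix.mul_apply, Finset.mul_sum]
    refine Finset.sum_congr rfl fun W _ => ?_
    rw [ih, signed]
    have : ((-1 : ℝ) ^ W.1.card) * (-1) ^ W.1.card = 1 := by
      rw [← mul_pow]; simp
    simp only [pow_add]
    linear_combination ((-1) ^ U.1.card * (-1) ^ V.1.card * (transfer r (TS r) ^ m) U W *
      transfer r (TS r) W V) * this

lemma signed_mul (r : I → I → Prop)
    (hr : ∀ S : Finset I, S.Nonempty → ∃ x ∈ S, ∀ y ∈ S, ¬ r y x) :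
    signed r * transfer r TW = 1 := by
  ext U V
  rw [Matrix.mul_apply, Matrix.one_apply]
  by_cases hUV : U.1 ⊆ V.1
  swap
  · rw [if_neg (by rintro rfl; exact hUV (Finset.Subset.refl _))]
    refine Finset.sum_eq_zero fun W _ => ?_
    unfold signed transfer TW TS
    by_cases h1 : U.1 ⊆ W.1
    · have h2 : ¬ W.1 ⊆ V.1 := fun h => hUV (h1.trans h)
      simp [h2]
    · simp [h1]
  set Mn : Finset I := (V.1 \ U.1).filter fun x => ∀ y, r y x → y ∈ U.1 with hMn
  have hsum : ∑ W, signed r U W * transfer r TW W V =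
      ∑ A ∈ Mn.powerset, ((-1 : ℝ)) ^ A.card := by
    have hf : ∑ W, signed r U W * transfer r TW W V =
        ∑ W ∈ Finset.univ.filter (fun W : DownSet r => TS r U.1 W.1 ∧ W.1 ⊆ V.1),
          (-1 : ℝ) ^ (U.1.card + W.1.card) := by
      rw [Finset.sum_filter]
      refine Finset.sum_congr rfl fun W _ => ?_
      unfold signed transfer TW
      by_cases h1 : TS r U.1 W.1 <;> by_cases h2 : W.1 ⊆ V.1 <;> simp [h1, h2]
    rw [hf]
    have hdisj : ∀ A ∈ Mn.powerset, Disjoint U.1 A := by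
      intro A hA
      rw [Finset.mem_powerset] at hA
      rw [Finset.disjoint_left]
      intro x hx hxA
      have := hA hxA
      simp [hMn, hx] at this
    have hdn : ∀ A ∈ Mn.powerset, ∀ i j, r i j → j ∈ U.1 ∪ A → i ∈ U.1 ∪ A := by
      intro A hA i j hij hj
      rw [Finset.mem_powerset] at hA
      rw [Finset.mem_union] at hj ⊢
      rcases hj with hj | hj
      · exact Or.inl (U.2 i j hij hj)
      · have := hA hj
        rw [hMn, Finset.mem_filter] at this
        exact Or.inl (this.2 i hij)
    refine Finset.sum_bij' (fun W _ => W.1 \ U.1)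
      (fun A hA => (⟨U.1 ∪ A, hdn A hA⟩ : DownSet r)) ?_ ?_ ?_ ?_ ?_
    · intro W hW
      rw [Finset.mem_filter] at hW
      obtain ⟨-, ⟨h1, h2⟩, h3⟩ := hW
      rw [Finset.mem_powerset]
      intro x hx
      rw [Finset.mem_sdiff] at hx
      rw [hMn, Finset.mem_filter, Finset.mem_sdiff]
      refine ⟨⟨h3 hx.1, hx.2⟩, fun y hy => ?_⟩
      by_contra hyU
      exact h2 y x hy (W.2 y x hy hx.1) hyU hx.1 hx.2
    · intro A hA
      rw [Finset.mem_filter]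
      have hA' := Finset.mem_powerset.1 hA
      refine ⟨Finset.mem_univ _, ⟨Finset.subset_union_left, ?_⟩, ?_⟩
      · intro i j hij hi hiU hj hjU
        have hjA : j ∈ A := (Finset.mem_union.1 hj).resolve_left hjU
        have := hA' hjA
        rw [hMn, Finset.mem_filter] at this
        exact hiU (this.2 i hij)
      · refine Finset.union_subset hUV fun x hx => ?_
        have := hA' hx
        rw [hMn, Finset.mem_filter, Finset.mem_sdiff] at this
        exact this.1.1
    · intro W hW
      rw [Finset.mem_filter] at hW
      apply Subtype.ext
      exact Finset.union_sdiff_of_subset hW.2.1.1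
    · intro A hA
      exact Finset.union_sdiff_cancel_left (hdisj A hA)
    · intro W hW
      rw [Finset.mem_filter] at hW
      have := Finset.card_sdiff_add_card_eq_card hW.2.1.1
      rw [← this]
      have e : U.1.card + ((W.1 \ U.1).card + U.1.card) = (W.1 \ U.1).card + 2 * U.1.card := by
        ring
      rw [e, pow_add, pow_mul]
      simp
  rw [hsum]
  have hz := Finset.sum_powerset_neg_one_pow_card (x := Mn)
  have hz' : ∑ A ∈ Mn.powerset, ((-1 : ℝ)) ^ A.card = if Mn = ∅ then 1 else 0 := by
    have := congrArg (Int.cast : ℤ → ℝ) hz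
    push_cast at this
    exact this
  rw [hz']
  have : Mn = ∅ ↔ U = V := by
    constructor
    · intro h
      by_contra hne
      have hne' : (V.1 \ U.1).Nonempty := by
        rw [Finset.sdiff_nonempty]
        intro h'
        exact hne (Subtype.ext (Finset.Subset.antisymm hUV h'))
      obtain ⟨x, hx, hmin⟩ := hr _ hne'
      have : x ∈ Mn := by
        rw [hMn, Finset.mem_filter]
        refine ⟨hx, fun y hy => ?_⟩
        by_contra hyU
        refine hmin y (Finset.mem_sdiff.2 ⟨V.2 y x hy (Finset.mem_sdiff.1 hx).1, hyU⟩) hy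
      rw [h] at this
      simp at this
    · rintro rfl
      simp [hMn]
  simp only [this]

/-- Reciprocity for order polynomials. -/
lemma order_recip (r : I → I → Prop)
    (hr : ∀ S : Finset I, S.Nonempty → ∃ x ∈ S, ∀ y ∈ S, ¬ r y x) :
    ∃ p : Polynomial ℝ, ∀ m : ℕ,
      p.eval (m : ℝ) = (((Fintype.piFinset fun _ : I => Finset.Icc 1 m).filter
        fun c => ∀ i j, r i j → c i < c j).card : ℝ) ∧
      (-1) ^ Fintype.card I * p.eval (-(m : ℝ)) =
        (((Fintype.piFinset fun _ : I => Finset.Icc 1 m).filter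
        fun c => ∀ i j, r i j → c i ≤ c j).card : ℝ) := by
  have hnil : (transfer r TW - 1) ^ (Fintype.card I + 1) = 0 := by
    ext U V
    by_contra h
    have h1 := transfer_nilp r (Fintype.card I + 1) U V h
    have h2 := Finset.card_le_univ V.1
    omega
  obtain ⟨p, hp1, hp2⟩ := exists_poly_recip (transfer r TW) (signed r) _ hnil (signed_mul r hr)
    (Matrix.entryLinearMap ℝ ℝ (botDown r) (topDown r))
  simp only [Matrix.entryLinearMap_apply] at hp1 hp2
  have hsq : ((-1 : ℝ) ^ Fintype.card I) * (-1) ^ Fintype.card I = 1 := by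
    rw [← mul_pow]; simp
  have hzs : ∀ c : I → ℕ, zeroSet c = ∅ ↔ ∀ i, 1 ≤ c i := by
    intro c
    rw [Finset.eq_empty_iff_forall_notMem]
    simp only [mem_zeroSet, Nat.one_le_iff_ne_zero]
  refine ⟨Polynomial.C ((-1) ^ Fintype.card I) * p.comp (-Polynomial.X), fun m => ⟨?_, ?_⟩⟩
  · simp only [Polynomial.eval_mul, Polynomial.eval_C, Polynomial.eval_comp, Polynomial.eval_neg,
      Polynomial.eval_X]
    rw [hp2, signed_pow, strict_count]
    have : (botDown r).1.card + (topDown r).1.card = Fintype.card I := by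
      simp [botDown, topDown]
    rw [this, ← mul_assoc, hsq, one_mul]
    congr 2
    ext c
    rw [mem_goodCol, Finset.mem_filter, Fintype.mem_piFinset]
    change _ ∧ zeroSet c = ∅ ∧ _ ↔ _
    rw [hzs]
    simp only [Finset.mem_Icc]
    constructor
    · rintro ⟨h1, h2, h3⟩
      refine ⟨fun i => ⟨h2 i, h1 i⟩, fun i j hij => ?_⟩
      have := h3 i j hij
      have := h2 i
      omega
    · rintro ⟨h1, h3⟩
      exact ⟨fun i => (h1 i).2, fun i => (h1 i).1, fun i j hij => Or.inl (h3 i j hij)⟩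
  · simp only [Polynomial.eval_mul, Polynomial.eval_C, Polynomial.eval_comp, Polynomial.eval_neg,
      Polynomial.eval_X, neg_neg]
    rw [hp1, weak_count, ← mul_assoc, hsq, one_mul]
    congr 2
    ext c
    rw [mem_goodCol, Finset.mem_filter, Fintype.mem_piFinset]
    change _ ∧ zeroSet c = ∅ ∧ _ ↔ _
    rw [hzs]
    simp only [Finset.mem_Icc]
    constructor
    · rintro ⟨h1, h2, h3⟩
      exact ⟨fun i => ⟨h2 i, h1 i⟩, h3⟩
    · rintro ⟨h1, h3⟩
      exact ⟨fun i => (h1 i).2, fun i => (h1 i).1, h3⟩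

end OrderPoly

/-- The relation of a heading. -/
def headRel {I ι : Type*} (edges : ι → Finset I) (σ : ι → I) (i j : I) : Prop :=
  ∃ a, σ a = j ∧ i ∈ edges a ∧ i ≠ j

lemma headRel_min {I ι : Type*} (edges : ι → Finset I) (σ : ι → I)
    (hσ : ¬ HasOrientedCycle edges σ) (S : Finset I) (hS : S.Nonempty) :
    ∃ x ∈ S, ∀ y ∈ S, ¬ headRel edges σ y x := by
  by_contra hcon
  push Not at hcon
  have hcon' : ∀ x : S, ∃ y : S, ∃ a, σ a = x.1 ∧ y.1 ∈ edges a ∧ y.1 ≠ x.1 := by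
    rintro ⟨x, hx⟩
    obtain ⟨y, hy, a, h⟩ := hcon x hx
    exact ⟨⟨y, hy⟩, a, h⟩
  choose f α h1 h2 h3 using hcon'
  obtain ⟨x0, hx0⟩ := hS
  let s : ℕ → S := fun k => f^[k] ⟨x0, hx0⟩
  have hs : ∀ k, s (k + 1) = f (s k) := fun k => Function.iterate_succ_apply' f k _
  obtain ⟨p, q, hpq, hs'⟩ : ∃ p q, p < q ∧ s p = s q := by
    obtain ⟨p, q, hne, he⟩ := Finite.exists_ne_map_eq_of_infinite s
    rcases lt_or_gt_of_ne hne with h | h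
    · exact ⟨p, q, h, he⟩
    · exact ⟨q, p, h, he.symm⟩
  apply hσ
  refine ⟨q - p, fun j => α (s (q - j)), by omega, fun j hj => ?_⟩
  have hstep : s (q - (j + 1) % (q - p)) = s (q - (j + 1)) := by
    rcases Nat.lt_or_ge (j + 1) (q - p) with h | h
    · rw [Nat.mod_eq_of_lt h]
    · have e : j + 1 = q - p := by omega
      rw [e, Nat.mod_self, Nat.sub_zero, ← hs']
      congr 1
      omega
  have hs2 : s (q - j) = f (s (q - (j + 1))) := by
    rw [← hs]; congr 1; omega
  dsimp only
  rw [hstep, h1, h1, hs2]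
  exact ⟨h2 _, h3 _⟩

lemma acyclic_of_strict {I ι : Type*} (edges : ι → Finset I) (σ : ι → I) (c : I → ℕ)
    (h : ∀ i j, headRel edges σ i j → c i < c j) : ¬ HasOrientedCycle edges σ := by
  rintro ⟨l, a, hl, hcyc⟩
  obtain ⟨j, hj, hmax⟩ := Finset.exists_max_image (Finset.range l) (fun j => c (σ (a j)))
    ⟨0, Finset.mem_range.2 hl⟩
  rw [Finset.mem_range] at hj
  have h1 := h _ _ ⟨_, rfl, hcyc j hj⟩
  have h2 := hmax ((j + 1) % l) (Finset.mem_range.2 (Nat.mod_lt _ hl))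
  omega

lemma compatible_iff {I ι : Type*} (edges : ι → Finset I) (σ : ι → I) (c : I → ℕ) :
    Compatible edges σ c ↔ ∀ i j, headRel edges σ i j → c i ≤ c j := by
  constructor
  · rintro h i _ ⟨a, rfl, hi, -⟩
    exact h a i hi
  · intro h a j hj
    by_cases e : j = σ a
    · rw [← e]
    · exact h _ _ ⟨a, rfl, hj, e⟩

/-- Let `h = (I, E)` be a hypergraph with `|I| = d` and `χ` the polynomial
counting proper colorings with `m` colors at positive integers `m`. Then for every `m > 0`,
`(-1)^d χ(-m)` equals the number of compatible pairs of an acyclic heading of `h` and a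
(not necessarily proper) coloring of `h` with `m` colors; in particular, the number of
acyclic headings of `h` equals `(-1)^d χ(-1)`. -/
theorem stmt12 {I : Type*} [Fintype I] [DecidableEq I] {ι : Type*} [Fintype ι]
    (edges : ι → Finset I) (hE : ∀ a, (edges a).Nonempty) (d : ℕ)
    (hd : Fintype.card I = d) (χ : Polynomial ℝ)
    (hχ : ∀ m : ℕ, 0 < m →
      χ.eval (m : ℝ) =
        Set.ncard {c : I → ℕ | (∀ i, c i ∈ Finset.Icc 1 m) ∧ IsProperColoring edges c}) :
    (∀ m : ℕ, 0 < m →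
      (-1 : ℝ) ^ d * χ.eval (-(m : ℝ)) =
        Set.ncard {p : (ι → I) × (I → ℕ) | IsAcyclicHeading edges p.1 ∧
          (∀ i, p.2 i ∈ Finset.Icc 1 m) ∧ Compatible edges p.1 p.2}) ∧
    (Set.ncard {σ : ι → I | IsAcyclicHeading edges σ} : ℝ) =
      (-1 : ℝ) ^ d * χ.eval (-1 : ℝ) := by
  subst hd
  let box : ℕ → Finset (I → ℕ) := fun m => Fintype.piFinset fun _ : I => Finset.Icc 1 m
  have hbox : ∀ m c, c ∈ box m ↔ ∀ i, c i ∈ Finset.Icc 1 m := fun m c => Fintype.mem_piFinset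
  let AH : Finset (ι → I) := Finset.univ.filter fun σ => IsAcyclicHeading edges σ
  have hAH : ∀ σ, σ ∈ AH ↔ IsAcyclicHeading edges σ := fun σ => by simp [AH]
  have hex : ∀ σ : ι → I, ∃ p : Polynomial ℝ, σ ∈ AH → ∀ m : ℕ,
      p.eval (m : ℝ) = (((box m).filter
        fun c => ∀ i j, headRel edges σ i j → c i < c j).card : ℝ) ∧
      (-1) ^ Fintype.card I * p.eval (-(m : ℝ)) =
        (((box m).filter fun c => ∀ i j, headRel edges σ i j → c i ≤ c j).card : ℝ) := by
    intro σ
    by_cases h : σ ∈ AH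
    · obtain ⟨p, hp⟩ := order_recip (headRel edges σ) (headRel_min edges σ ((hAH σ).1 h).2)
      refine ⟨p, fun _ m => ?_⟩
      convert hp m
    · exact ⟨0, fun h' => absurd h' h⟩
  choose p hp using hex
  have hsum : χ = ∑ σ ∈ AH, p σ := by
    refine poly_eq_of_nat 1 fun m hm => ?_
    rw [hχ m hm, Polynomial.eval_finsetSum, Finset.sum_congr rfl fun σ hσ => (hp σ hσ m).1,
      ← Nat.cast_sum, ← Finset.card_sigma]
    congr 1
    rw [← Set.ncard_coe_finset]
    symm
    refine Set.ncard_congr (fun x _ => x.2) ?_ ?_ ?_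
    · rintro ⟨σ, c⟩ hx
      simp only [Finset.coe_sigma, Set.mem_sigma_iff, Finset.mem_coe, Finset.mem_filter, hAH,
        hbox] at hx
      obtain ⟨h1, h2, h3⟩ := hx
      refine ⟨h2, fun a => ⟨σ a, ⟨h1.1 a, ?_⟩, ?_⟩⟩
      · exact (compatible_iff edges σ c).2 (fun i j h => (h3 i j h).le) a
      · rintro y ⟨hy1, hy2⟩
        by_contra hne
        have e1 := h3 _ _ ⟨a, rfl, hy1, hne⟩
        have e2 := hy2 _ (h1.1 a)
        dsimp only at e2
        omega
    · rintro ⟨σ, c⟩ ⟨τ, c'⟩ hx hy (rfl : c = c')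
      simp only [Finset.coe_sigma, Set.mem_sigma_iff, Finset.mem_coe, Finset.mem_filter, hAH,
        hbox] at hx hy
      have : σ = τ := by
        funext a
        by_contra hne
        have e1 := hx.2.2 _ _ ⟨a, rfl, hy.1.1 a, fun h => hne h.symm⟩
        have e2 := hy.2.2 _ _ ⟨a, rfl, hx.1.1 a, hne⟩
        omega
      rw [this]
    · rintro c ⟨h1, h2⟩
      choose σ hσ hu using h2
      have hst : ∀ i j, headRel edges σ i j → c i < c j := by
        rintro i _ ⟨a, rfl, hi, hne⟩
        refine lt_of_le_of_ne ((hσ a).2 i hi) fun he => hne ?_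
        refine hu a i ⟨hi, fun j hj => ?_⟩
        rw [he]
        exact (hσ a).2 j hj
      refine ⟨⟨σ, c⟩, ?_, rfl⟩
      simp only [Finset.coe_sigma, Set.mem_sigma_iff, Finset.mem_coe, Finset.mem_filter, hAH,
        hbox]
      exact ⟨⟨fun a => (hσ a).1, acyclic_of_strict edges σ c hst⟩, h1, hst⟩
  have main : ∀ m : ℕ, 0 < m →
      (-1 : ℝ) ^ Fintype.card I * χ.eval (-(m : ℝ)) =
        Set.ncard {p : (ι → I) × (I → ℕ) | IsAcyclicHeading edges p.1 ∧
          (∀ i, p.2 i ∈ Finset.Icc 1 m) ∧ Compatible edges p.1 p.2} := by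
    intro m _
    rw [hsum, Polynomial.eval_finsetSum, Finset.mul_sum,
      Finset.sum_congr rfl fun σ hσ => (hp σ hσ m).2, ← Nat.cast_sum, ← Finset.card_sigma]
    congr 1
    rw [← Set.ncard_coe_finset]
    refine Set.ncard_congr (fun x _ => (x.1, x.2)) ?_ ?_ ?_
    · rintro ⟨σ, c⟩ hx
      simp only [Finset.coe_sigma, Set.mem_sigma_iff, Finset.mem_coe, Finset.mem_filter, hAH,
        hbox, ← compatible_iff] at hx
      exact hx
    · rintro ⟨σ, c⟩ ⟨τ, c'⟩ _ _ h
      simp only [Prod.mk.injEq] at h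
      obtain ⟨rfl, rfl⟩ := h
      rfl
    · rintro ⟨σ, c⟩ hx
      refine ⟨⟨σ, c⟩, ?_, rfl⟩
      simp only [Finset.coe_sigma, Set.mem_sigma_iff, Finset.mem_coe, Finset.mem_filter, hAH,
        hbox, ← compatible_iff]
      exact hx
  refine ⟨main, ?_⟩
  have h1 := main 1 one_pos
  rw [Nat.cast_one] at h1
  rw [h1]
  congr 1
  refine Set.ncard_congr (fun σ _ => (σ, fun _ => 1)) ?_ ?_ ?_
  · intro σ hσ
    exact ⟨hσ, fun i => by simp, fun a j _ => le_refl _⟩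
  · intro σ τ _ _ h
    exact (Prod.mk.inj h).1
  · rintro ⟨σ, c⟩ ⟨h1, h2, -⟩
    refine ⟨σ, h1, ?_⟩
    have : c = fun _ => 1 := by
      funext i
      have := h2 i
      simp only [Finset.mem_Icc] at this
      omega
    rw [this]
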